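/- Let N = 2n+2 with n ≥ 1, and let ω_k = 2 sin(kπ/N). If multi-indices Θ, θ : {1, …, N−1} → ℤ_{≥0} satisfy Σ_{k=1}^{N−1}(Θ_k + θ_k) = 4, μ(Θ, θ) ≡ 0 (mod N), and ν(Θ, θ) = 0, then θ_k − θ_{N−k} − Θ_k + Θ_{N−k} = 0 for every 1 ≤ k < N/2 and θ_{N/2} − Θ_{N/2} = 0. -/

import Mathlib

open Finset Real

/-- The eigenvalue datum `ν(Θ, θ) = Σ_{k=1}^{N/2−1} ω_k (θ_k − θ_{N−k} − Θ_k + Θ_{N−k})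
+ ω_{N/2}(θ_{N/2} − Θ_{N/2})` for the periodic FPU lattice with `N = 2n+2` particles,
where `ω_k = 2 sin(kπ/N)`.  (So `i·ν(Θ,θ)` are the eigenvalues of `ad_{H₂}` on the
monomials `z^Θ ζ^θ`.) -/
noncomputable def fpuNu (n : ℕ) (Θ θ : ℕ → ℕ) : ℝ :=
  (∑ k ∈ Finset.Icc 1 n, 2 * Real.sin (k * π / (2 * n + 2)) *
      ((θ k : ℝ) - θ (2 * n + 2 - k) - Θ k + Θ (2 * n + 2 - k))) +
    2 * Real.sin ((n + 1) * π / (2 * n + 2)) * ((θ (n + 1) : ℝ) - Θ (n + 1))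

/-- The eigenvalue datum `μ(Θ, θ) = Σ_{k=1}^{N/2−1} k (Θ_k + Θ_{N−k} − θ_k − θ_{N−k})
+ (N/2)(Θ_{N/2} − θ_{N/2})`, regarded modulo `N`, for the periodic FPU lattice with
`N = 2n+2` particles.  (So `e^{2πiμ(Θ,θ)/N}` are the eigenvalues of pullback by the
cyclic symmetry `R` on the monomials `z^Θ ζ^θ`.) -/
def fpuMu (n : ℕ) (Θ θ : ℕ → ℕ) : ℤ :=
  (∑ k ∈ Finset.Icc 1 n, (k : ℤ) *
      ((Θ k : ℤ) + Θ (2 * n + 2 - k) - θ k - θ (2 * n + 2 - k))) +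
    (n + 1 : ℤ) * ((Θ (n + 1) : ℤ) - θ (n + 1))

/-!
Exchanging `Θ` and `θ` at the modes `k > N/2` turns `ν` into `Σ ω_k (p_k - q_k)` and `μ` into
`Σ k (q_k - p_k)` modulo `N`, so a quartic resonance consists of four rational multiples of `π` in
`(0, π)`, distributed over the two sides of an equation between sums of sines, whose total (after
reflecting one side by `x ↦ π - x`) is a multiple of `π`. All four cannot lie on one side, because
the sines are positive, and the split `3 + 1` is excluded by
`|sin (x + y + z)| < sin x + sin y + sin z`. There remains `sin x + sin y = sin z + sin w`.

If `x + y + z + w = 2π`, the sum-to-product formulas settle the matter. The total `3π` reduces to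
the total `π`, and there the roots of unity `α = e^{-i(x+y)}`, `β = e^{i(y+z)}`, `γ = e^{i(x+z)}`
satisfy the symmetric relation `(1 - α)(1 - β)(1 - γ) = 2(1 - αβγ)`. At a place `v` above `2` one
has `v(2) ≤ v(1 - ζ) ^ 2 ^ k` for roots of unity with `ζ ^ 2 ^ k ≠ 1`, and `v(1 - αβγ)` is at most
the largest of `v(1 - α)`, `v(1 - β)`, `v(1 - γ)`. Comparing both sides, two of `α²`, `β²`, `γ²`
must be `-1`, and then the two sides of the resonance are equal up to order.
-/

section Valuation

variable {R Γ₀ : Type*} [CommRing R] [LinearOrderedCommGroupWithZero Γ₀] (v : Valuation R Γ₀)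

theorem valuation_eq_one_of_isOfFinOrder {x : R} (hx : IsOfFinOrder x) : v x = 1 := by
  obtain ⟨n, hn, hxn⟩ := isOfFinOrder_iff_pow_eq_one.1 hx
  refine (pow_eq_one_iff_of_nonneg zero_le hn.ne').1 ?_
  rw [← map_pow, hxn, map_one]

theorem valuation_one_sub_pow_le {x : R} (hx : v x ≤ 1) (i : ℕ) :
    v (1 - x ^ i) ≤ v (1 - x) := by
  have hgeom : v (∑ j ∈ range i, x ^ j) ≤ 1 :=
    v.map_sum_le fun j _ => by simpa only [map_pow] using pow_le_one' hx j
  rw [← mul_neg_geom_sum, map_mul]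
  exact mul_le_of_le_one_right' hgeom

theorem valuation_one_sub_mul_le_max {x : R} (hx : v x ≤ 1) (y : R) :
    v (1 - x * y) ≤ max (v (1 - x)) (v (1 - y)) := by
  rw [show 1 - x * y = (1 - x) + x * (1 - y) by ring]
  refine (v.map_add _ _).trans (max_le_max_left _ ?_)
  rw [map_mul]
  exact mul_le_of_le_one_left' hx

theorem valuation_natCast_le_one_sub [IsDomain R] {x : R} {n : ℕ} (hxn : x ^ n = 1)
    (hx : x ≠ 1) : v n ≤ v (1 - x) := by
  have hgeom : ∑ i ∈ range n, x ^ i = 0 := by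
    have h := mul_neg_geom_sum x n
    rw [hxn, sub_self] at h
    exact (mul_eq_zero.1 h).resolve_left (sub_ne_zero.2 hx.symm)
  have hn : (n : R) = ∑ i ∈ range n, (1 - x ^ i) := by simp [hgeom]
  rw [hn]
  refine v.map_sum_le fun i hi => valuation_one_sub_pow_le v ?_ i
  have hn0 : 0 < n := (Nat.zero_le i).trans_lt (mem_range.1 hi)
  exact (valuation_eq_one_of_isOfFinOrder v (isOfFinOrder_iff_pow_eq_one.2 ⟨n, hn0, hxn⟩)).le

variable {v} (h2 : v 2 < 1)
include h2

theorem valuation_natCast_eq_one_of_odd {n : ℕ} (hn : Odd n) : v n = 1 := by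
  obtain ⟨k, rfl⟩ := hn
  have hk : v k ≤ 1 := by
    simpa using v.map_sum_le (s := range k) (f := fun _ => 1) fun _ _ => v.map_one.le
  have h2k : v (2 * k) < 1 := by
    rw [map_mul]
    exact (mul_le_of_le_one_right' hk).trans_lt h2
  push_cast
  rw [add_comm, v.map_one_add_of_lt h2k]

theorem valuation_two_le_one_sub [IsDomain R] {x : R} (hx : IsOfFinOrder x) (hx1 : x ≠ 1) :
    v 2 ≤ v (1 - x) := by
  have hd : orderOf x ≠ 1 := mt orderOf_eq_one_iff.1 hx1
  have hp : (orderOf x).minFac.Prime := Nat.minFac_prime hd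
  set p := (orderOf x).minFac
  set y := x ^ (orderOf x / p)
  have hy : orderOf y = p := orderOf_pow_orderOf_div hx.orderOf_pos.ne' (Nat.minFac_dvd _)
  have hyp : y ^ p = 1 := hy ▸ pow_orderOf_eq_one y
  have hy1 : y ≠ 1 := fun h => hp.ne_one (by rw [← hy, h, orderOf_one])
  calc v 2 ≤ v p := by
        rcases hp.eq_two_or_odd' with hp2 | hodd
        · simp [hp2]
        · simpa only [valuation_natCast_eq_one_of_odd h2 hodd] using h2.le
    _ ≤ v (1 - y) := valuation_natCast_le_one_sub v hyp hy1
    _ ≤ v (1 - x) := valuation_one_sub_pow_le v (valuation_eq_one_of_isOfFinOrder v hx).le _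

theorem valuation_two_le_one_sub_pow_two_pow [IsDomain R] {x : R} (hx : IsOfFinOrder x) {k : ℕ}
    (hxk : x ^ 2 ^ k ≠ 1) : v 2 ≤ v (1 - x) ^ 2 ^ k := by
  induction k generalizing x with
  | zero => simpa using valuation_two_le_one_sub h2 hx (by simpa using hxk)
  | succ k ih =>
    have hx1 : x ≠ 1 := by
      rintro rfl
      exact hxk (one_pow _)
    have hadd : v (1 + x) ≤ v (1 - x) := by
      rw [show 1 + x = 2 - (1 - x) by ring]
      exact v.map_sub_le (valuation_two_le_one_sub h2 hx hx1) le_rfl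
    calc v 2 ≤ v (1 - x ^ 2) ^ 2 ^ k := ih hx.pow (by rwa [← pow_mul, ← pow_succ'])
      _ = (v (1 - x) * v (1 + x)) ^ 2 ^ k := by
        rw [← map_mul]
        ring_nf
      _ ≤ (v (1 - x) ^ 2) ^ 2 ^ k := by
        rw [sq]
        gcongr
      _ = v (1 - x) ^ 2 ^ (k + 1) := by rw [← pow_mul, ← pow_succ']

end Valuation

theorem lt_mul_of_le_sq_of_le_pow_four {Γ₀ : Type*} [LinearOrderedCommGroupWithZero Γ₀]
    {t a b : Γ₀} (ht0 : 0 < t) (ht1 : t < 1) (ha : t ≤ a ^ 2) (hb : t ≤ b ^ 4) : t < a * b := by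
  refine lt_of_pow_lt_pow_left₀ 4 zero_le ?_
  calc t ^ 4 < t ^ 3 := pow_lt_pow_right_of_lt_one₀ ht0 ht1 (by norm_num)
    _ = t ^ 2 * t := pow_succ t 2
    _ ≤ (a ^ 2) ^ 2 * b ^ 4 := by gcongr
    _ = (a * b) ^ 4 := by rw [← pow_mul, mul_pow]

theorem exists_valuationSubring_natCast_lt_one (K : Type*) [Field K] [CharZero K] {p : ℕ}
    (hp : p ≠ 1) : ∃ V : ValuationSubring K, V.valuation p < 1 := by
  have hI : Ideal.span {(p : (⊥ : Subring K))} ≠ ⊤ := by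
    rw [Ne, Ideal.span_singleton_eq_top, isUnit_iff_exists_inv]
    rintro ⟨⟨a, ha⟩, h⟩
    obtain ⟨m, rfl⟩ := Subring.mem_bot.1 ha
    have hK : (p : K) * m = 1 := congrArg Subtype.val h
    have hℤ : (p : ℤ) * m = 1 := by exact_mod_cast hK
    exact hp (by simpa using Int.isUnit_iff_natAbs_eq.1 (.of_mul_eq_one _ hℤ))
  obtain ⟨V, -, hV⟩ := Ideal.image_subset_nonunits_valuationSubring _ hI
  exact ⟨V, V.mem_nonunits_iff.1 (hV ⟨p, Ideal.mem_span_singleton_self _, rfl⟩)⟩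

theorem mul_le_of_mul_mul_eq_mul_of_le_max {Γ₀ : Type*} [LinearOrderedCommGroupWithZero Γ₀]
    {a b c t m : Γ₀} (ha : 0 < a) (hb : 0 < b) (hc : 0 < c) (h : a * b * c = t * m)
    (hm : m ≤ max (max a b) c) : b * c ≤ t ∨ a * c ≤ t ∨ a * b ≤ t := by
  have hcancel {x y : Γ₀} (hx : 0 < x) (hmx : m ≤ x) (hxy : y * x = t * m) : y ≤ t :=
    le_of_mul_le_mul_right (hxy.trans_le (mul_le_mul_right hmx t)) hx
  rcases le_max_iff.1 hm with hab | hmc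
  · rcases le_max_iff.1 hab with hma | hmb
    · exact .inl (hcancel ha hma (by rw [← h, mul_assoc a, mul_comm]))
    · exact .inr (.inl (hcancel hb hmb (by rw [← h, mul_right_comm])))
  · exact .inr (.inr (hcancel hc hmc h))

theorem sq_eq_neg_one_or_sq_eq_neg_one_of_one_sub_mul_eq {K : Type*} [Field K] [CharZero K]
    {α β γ : K} (hα : IsOfFinOrder α) (hβ : IsOfFinOrder β) (hγ : IsOfFinOrder γ)
    (hα2 : α ^ 2 ≠ 1) (hβ2 : β ^ 2 ≠ 1) (hγ2 : γ ^ 2 ≠ 1)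
    (h : (1 - α) * (1 - β) * (1 - γ) = 2 * (1 - α * β * γ)) : β ^ 2 = -1 ∨ γ ^ 2 = -1 := by
  obtain ⟨V, h2⟩ := exists_valuationSubring_natCast_lt_one K (p := 2) (by norm_num)
  set v := V.valuation
  rw [Nat.cast_two] at h2
  have ht : 0 < v 2 := zero_lt_iff.2 ((map_ne_zero v).2 two_ne_zero)
  have hsq {x : K} (hx : IsOfFinOrder x) (hx2 : x ^ 2 ≠ 1) : v 2 ≤ v (1 - x) ^ 2 :=
    valuation_two_le_one_sub_pow_two_pow h2 hx (k := 1) hx2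
  have hfour {x : K} (hx : IsOfFinOrder x) (hx2 : x ^ 2 ≠ 1) (hx2' : x ^ 2 ≠ -1) :
      v 2 ≤ v (1 - x) ^ 4 := by
    refine valuation_two_le_one_sub_pow_two_pow h2 hx (k := 2) fun hx4 => ?_
    exact (sq_eq_one_iff.1 (by rwa [← pow_mul])).elim hx2 hx2'
  have hpos {x : K} (hx2 : x ^ 2 ≠ 1) : 0 < v (1 - x) := by
    refine zero_lt_iff.2 ((map_ne_zero v).2 (sub_ne_zero.2 ?_))
    rintro rfl
    exact hx2 (one_pow 2)
  have hprod : v (1 - α) * v (1 - β) * v (1 - γ) = v 2 * v (1 - α * β * γ) := by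
    simp only [← map_mul, h]
  have hmax : v (1 - α * β * γ) ≤ max (max (v (1 - α)) (v (1 - β))) (v (1 - γ)) :=
    (valuation_one_sub_mul_le_max v (valuation_eq_one_of_isOfFinOrder v (hα.mul hβ)).le γ).trans
      (max_le_max_right _
        (valuation_one_sub_mul_le_max v (valuation_eq_one_of_isOfFinOrder v hα).le β))
  by_contra! hcon
  have hβ4 := hfour hβ hβ2 hcon.1
  have hγ4 := hfour hγ hγ2 hcon.2
  rcases mul_le_of_mul_mul_eq_mul_of_le_max (hpos hα2) (hpos hβ2) (hpos hγ2) hprod hmax with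
    hβγ | hαγ | hαβ
  · exact (lt_mul_of_le_sq_of_le_pow_four ht h2 (hsq hβ hβ2) hγ4).not_ge hβγ
  · exact (lt_mul_of_le_sq_of_le_pow_four ht h2 (hsq hα hα2) hγ4).not_ge hαγ
  · exact (lt_mul_of_le_sq_of_le_pow_four ht h2 (hsq hα hα2) hβ4).not_ge hαβ

theorem isOfFinOrder_exp_rat_mul_pi_mul_I (q : ℚ) :
    IsOfFinOrder (Complex.exp (q * π * Complex.I)) :=
  isOfFinOrder_iff_pow_eq_one.2 ⟨2 * q.den, Nat.mul_pos two_pos q.den_pos,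
    Complex.exp_rat_mul_pi_mul_I_pow_two_mul_den q⟩

theorem exp_rat_mul_pi_mul_I_sq_ne_one {q : ℚ} (hq : q ∈ Set.Ioo 0 1) :
    Complex.exp (q * π * Complex.I) ^ 2 ≠ 1 := by
  rw [← Complex.exp_nat_mul, Ne, Complex.exp_eq_one_iff]
  rintro ⟨n, hn⟩
  have hqn : (q : ℂ) = n :=
    mul_right_cancel₀ Complex.two_pi_I_ne_zero (by linear_combination hn)
  have hqn' : q = n := by exact_mod_cast hqn
  obtain ⟨h0, h1⟩ := hq
  rw [hqn'] at h0 h1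
  norm_cast at h0 h1
  omega

theorem eq_half_of_exp_rat_mul_pi_mul_I_sq_eq_neg_one {q : ℚ} (hq : q ∈ Set.Ioo 0 1)
    (h : Complex.exp (q * π * Complex.I) ^ 2 = -1) : q = 1 / 2 := by
  rw [← Complex.exp_nat_mul, ← Complex.exp_pi_mul_I, Complex.exp_eq_exp_iff_exists_int] at h
  obtain ⟨n, hn⟩ := h
  have hqn : (2 * q : ℂ) = 1 + 2 * n :=
    mul_right_cancel₀ (mul_ne_zero (Complex.ofReal_ne_zero.2 pi_ne_zero) Complex.I_ne_zero)
      (by linear_combination hn)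
  have hqn' : 2 * q = 1 + 2 * n := by exact_mod_cast hqn
  obtain ⟨h0, h1⟩ := hq
  have hn0 : n = 0 := by
    have hlow : (-1 : ℚ) < n := by linarith
    have hup : (n : ℚ) < 1 := by linarith
    norm_cast at hlow hup
    omega
  rw [hn0] at hqn'
  push_cast at hqn'
  linarith

theorem one_sub_exp_mul_eq_of_sin_add_sin_eq {x y z : ℂ}
    (h : Complex.sin x + Complex.sin y = Complex.sin z + Complex.sin (x + y + z)) :
    (1 - (Complex.exp ((x + y) * Complex.I))⁻¹) * (1 - Complex.exp ((y + z) * Complex.I)) *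
        (1 - Complex.exp ((x + z) * Complex.I)) =
      2 * (1 - (Complex.exp ((x + y) * Complex.I))⁻¹ * Complex.exp ((y + z) * Complex.I) *
        Complex.exp ((x + z) * Complex.I)) := by
  simp only [Complex.sin, add_mul, neg_add, neg_mul, Complex.exp_add, Complex.exp_neg] at h ⊢
  have hX := Complex.exp_ne_zero (x * Complex.I)
  have hY := Complex.exp_ne_zero (y * Complex.I)
  have hZ := Complex.exp_ne_zero (z * Complex.I)
  generalize Complex.exp (x * Complex.I) = X at *
  generalize Complex.exp (y * Complex.I) = Y at *
  generalize Complex.exp (z * Complex.I) = Z at *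
  have hXYZ : (X⁻¹ - X) + (Y⁻¹ - Y) = (Z⁻¹ - Z) + (X⁻¹ * Y⁻¹ * Z⁻¹ - X * Y * Z) :=
    mul_right_cancel₀ Complex.I_ne_zero (by linear_combination 2 * h)
  field_simp at hXYZ ⊢
  linear_combination hXYZ

theorem eq_pi_of_cos_half_eq_zero {t : ℝ} (ht : t ∈ Set.Ioo 0 (2 * π)) (h : cos (t / 2) = 0) :
    t = π := by
  obtain ⟨h0, h1⟩ := ht
  have := Real.injOn_cos ⟨by linarith, by linarith⟩ ⟨by positivity, by linarith [pi_pos]⟩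
    (h.trans Real.cos_pi_div_two.symm)
  linarith

theorem eq_or_add_eq_pi_of_sin_eq_sin {x y : ℝ} (hx : x ∈ Set.Ioo 0 π) (hy : y ∈ Set.Ioo 0 π)
    (h : sin x = sin y) : x = y ∨ x + y = π := by
  obtain ⟨hx0, hx1⟩ := hx
  obtain ⟨hy0, hy1⟩ := hy
  have hprod : 2 * sin ((x - y) / 2) * cos ((x + y) / 2) = 0 := by
    rw [← Real.sin_sub_sin, h, sub_self]
  rcases mul_eq_zero.1 hprod with hsub | hadd
  · have := (Real.sin_eq_zero_iff_of_lt_of_lt (by linarith) (by linarith)).1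
      ((mul_eq_zero.1 hsub).resolve_left two_ne_zero)
    exact .inl (by linarith)
  · exact .inr (eq_pi_of_cos_half_eq_zero ⟨by linarith, by linarith⟩ hadd)

theorem add_eq_pi_or_add_eq_pi_of_sin_add_sin_eq {x y z w : ℝ} (hx : x ∈ Set.Ioo 0 π)
    (hy : y ∈ Set.Ioo 0 π) (hz : z ∈ Set.Ioo 0 π)
    (hsum : x + y + z + w = 2 * π)
    (h : sin x + sin y = sin z + sin w) :
    x + z = π ∨ x + w = π := by
  have hfactor : sin ((x + y) / 2) * (cos ((x + z) / 2) * cos ((y + z) / 2)) = 0 := by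
    have hprod : sin ((x + y) / 2) * (cos ((x - y) / 2) - cos ((z - w) / 2)) = 0 := by
      have hzw : sin ((z + w) / 2) = sin ((x + y) / 2) := by
        rw [← Real.sin_pi_sub]
        congr 1
        linarith
      rw [Real.sin_add_sin, Real.sin_add_sin, hzw] at h
      linarith
    have hcos : cos ((z - w) / 2) = -cos ((x + z) / 2 + (y + z) / 2) := by
      rw [← Real.cos_sub_pi]
      congr 1
      linarith
    have hprod' := Real.two_mul_cos_mul_cos ((x + z) / 2) ((y + z) / 2)
    rw [show (x + z) / 2 - (y + z) / 2 = (x - y) / 2 by ring] at hprod'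
    rw [hcos] at hprod
    linear_combination hprod / 2 + sin ((x + y) / 2) / 2 * hprod'
  obtain ⟨hx0, hx1⟩ := hx
  obtain ⟨hy0, hy1⟩ := hy
  obtain ⟨hz0, hz1⟩ := hz
  have hsin : sin ((x + y) / 2) ≠ 0 :=
    (Real.sin_pos_of_pos_of_lt_pi (by linarith) (by linarith)).ne'
  rcases mul_eq_zero.1 ((mul_eq_zero.1 hfactor).resolve_left hsin) with hxz | hyz
  · exact .inl (eq_pi_of_cos_half_eq_zero ⟨by linarith, by linarith⟩ hxz)
  · have := eq_pi_of_cos_half_eq_zero ⟨by linarith, by linarith⟩ hyz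
    exact .inr (by linarith)

theorem one_sub_exp_rat_mul_eq_of_sin_add_sin_eq {p q r s : ℚ} (hsum : p + q + r + s = 1)
    (h : sin (p * π) + sin (q * π) = sin (r * π) + sin (s * π)) :
    (1 - (Complex.exp ((p + q : ℚ) * π * Complex.I))⁻¹) *
        (1 - Complex.exp ((q + r : ℚ) * π * Complex.I)) *
        (1 - Complex.exp ((p + r : ℚ) * π * Complex.I)) =
      2 * (1 - (Complex.exp ((p + q : ℚ) * π * Complex.I))⁻¹ *
        Complex.exp ((q + r : ℚ) * π * Complex.I) * Complex.exp ((p + r : ℚ) * π * Complex.I)) := by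
  have hs : sin (s * π) = sin (p * π + q * π + r * π) := by
    rw [← Real.sin_pi_sub, ← add_mul, ← add_mul, show s = 1 - (p + q + r) by linarith]
    push_cast
    ring_nf
  rw [hs] at h
  simpa only [Rat.cast_add, add_mul] using
    one_sub_exp_mul_eq_of_sin_add_sin_eq (x := p * π) (y := q * π) (z := r * π)
      (by exact_mod_cast congrArg Complex.ofReal h)

theorem two_of_three_add_eq_half_of_sum_eq_one {p q r s : ℚ} (hp : 0 < p) (hq : 0 < q)
    (hr : 0 < r) (hs : 0 < s) (hsum : p + q + r + s = 1)
    (h : sin (p * π) + sin (q * π) = sin (r * π) + sin (s * π)) :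
    (q + r = 1 / 2 ∨ p + r = 1 / 2) ∧ (p + q = 1 / 2 ∨ p + r = 1 / 2) ∧
      (p + q = 1 / 2 ∨ q + r = 1 / 2) := by
  have hpq : p + q ∈ Set.Ioo 0 1 := ⟨by linarith, by linarith⟩
  have hqr : q + r ∈ Set.Ioo 0 1 := ⟨by linarith, by linarith⟩
  have hpr : p + r ∈ Set.Ioo 0 1 := ⟨by linarith, by linarith⟩
  have hprod := one_sub_exp_rat_mul_eq_of_sin_add_sin_eq hsum h
  have hpq_fin : IsOfFinOrder (Complex.exp ((p + q : ℚ) * π * Complex.I))⁻¹ := by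
    simpa only [← Complex.exp_neg, ← neg_mul, Rat.cast_neg] using
      isOfFinOrder_exp_rat_mul_pi_mul_I (-(p + q))
  have hqr_fin := isOfFinOrder_exp_rat_mul_pi_mul_I (q + r)
  have hpr_fin := isOfFinOrder_exp_rat_mul_pi_mul_I (p + r)
  have hpq_ne : (Complex.exp ((p + q : ℚ) * π * Complex.I))⁻¹ ^ 2 ≠ 1 := by
    rw [inv_pow, Ne, inv_eq_one]
    exact exp_rat_mul_pi_mul_I_sq_ne_one hpq
  have hqr_ne := exp_rat_mul_pi_mul_I_sq_ne_one hqr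
  have hpr_ne := exp_rat_mul_pi_mul_I_sq_ne_one hpr
  have hpq_half (h1 : (Complex.exp ((p + q : ℚ) * π * Complex.I))⁻¹ ^ 2 = -1) :
      p + q = 1 / 2 := by
    rw [inv_pow, inv_eq_iff_eq_inv, inv_neg_one] at h1
    exact eq_half_of_exp_rat_mul_pi_mul_I_sq_eq_neg_one hpq h1
  have hqr_half := eq_half_of_exp_rat_mul_pi_mul_I_sq_eq_neg_one hqr
  have hpr_half := eq_half_of_exp_rat_mul_pi_mul_I_sq_eq_neg_one hpr
  generalize (Complex.exp ((p + q : ℚ) * π * Complex.I))⁻¹ = α at *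
  generalize Complex.exp ((q + r : ℚ) * π * Complex.I) = β at *
  generalize Complex.exp ((p + r : ℚ) * π * Complex.I) = γ at *
  exact ⟨(sq_eq_neg_one_or_sq_eq_neg_one_of_one_sub_mul_eq hpq_fin hqr_fin hpr_fin
      hpq_ne hqr_ne hpr_ne hprod).imp hqr_half hpr_half,
    (sq_eq_neg_one_or_sq_eq_neg_one_of_one_sub_mul_eq hqr_fin hpq_fin hpr_fin
      hqr_ne hpq_ne hpr_ne (by linear_combination hprod)).imp hpq_half hpr_half,
    (sq_eq_neg_one_or_sq_eq_neg_one_of_one_sub_mul_eq hpr_fin hpq_fin hqr_fin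
      hpr_ne hpq_ne hqr_ne (by linear_combination hprod)).imp hpq_half hqr_half⟩

theorem sin_rat_mul_pi_eq_or_eq_of_sum_eq_one {p q r s : ℚ} (hp : 0 < p) (hq : 0 < q)
    (hr : 0 < r) (hs : 0 < s) (hsum : p + q + r + s = 1)
    (h : sin (p * π) + sin (q * π) = sin (r * π) + sin (s * π)) :
    sin (p * π) = sin (r * π) ∨ sin (p * π) = sin (s * π) := by
  obtain ⟨hqr_or_pr, hpq_or_pr, hpq_or_qr⟩ :=
    two_of_three_add_eq_half_of_sum_eq_one hp hq hr hs hsum h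
  have heq : p = r ∨ q = r ∨ p = q ∧ r = s := by
    rcases hpq_or_pr with hpq' | hpr'
    · rcases hqr_or_pr with hqr' | hpr'
      · exact .inl (by linarith)
      · exact .inr (.inl (by linarith))
    · rcases hpq_or_qr with hpq' | hqr'
      · exact .inr (.inl (by linarith))
      · exact .inr (.inr ⟨by linarith, by linarith⟩)
  rcases heq with rfl | rfl | ⟨rfl, rfl⟩
  · exact .inl rfl
  · exact .inr (by linarith)
  · exact .inl (by linarith)

theorem rat_mul_pi_mem_Ioo {q : ℚ} (hq : q ∈ Set.Ioo 0 1) : (q * π : ℝ) ∈ Set.Ioo 0 π := by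
  have h0 : (0 : ℝ) < q := by exact_mod_cast hq.1
  have h1 : (q : ℝ) < 1 := by exact_mod_cast hq.2
  exact ⟨by positivity, mul_lt_of_lt_one_left pi_pos h1⟩

theorem sin_rat_mul_pi_pos {q : ℚ} (hq : q ∈ Set.Ioo 0 1) : 0 < sin (q * π) :=
  Real.sin_pos_of_mem_Ioo (rat_mul_pi_mem_Ioo hq)

theorem sin_one_sub_rat_mul_pi (q : ℚ) : sin ((1 - q : ℚ) * π) = sin (q * π) := by
  rw [← Real.sin_pi_sub]
  push_cast
  ring_nf

theorem sin_rat_mul_pi_eq_or_eq {p q r s : ℚ} (hp : p ∈ Set.Ioo 0 1) (hq : q ∈ Set.Ioo 0 1)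
    (hr : r ∈ Set.Ioo 0 1) (hs : s ∈ Set.Ioo 0 1) {m : ℤ} (hsum : p + q + r + s = m)
    (h : sin (p * π) + sin (q * π) = sin (r * π) + sin (s * π)) :
    sin (p * π) = sin (r * π) ∨ sin (p * π) = sin (s * π) := by
  have hm : m = 1 ∨ m = 2 ∨ m = 3 := by
    have hm0 : (0 : ℚ) < m := by linarith [hp.1, hq.1, hr.1, hs.1]
    have hm4 : (m : ℚ) < 4 := by linarith [hp.2, hq.2, hr.2, hs.2]
    norm_cast at hm0 hm4
    omega
  rcases hm with rfl | rfl | rfl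
  · exact sin_rat_mul_pi_eq_or_eq_of_sum_eq_one hp.1 hq.1 hr.1 hs.1 (by simpa using hsum) h
  · have hsum' : (p * π + q * π + r * π + s * π : ℝ) = 2 * π := by
      rw [← add_mul, ← add_mul, ← add_mul]
      congr 1
      exact_mod_cast hsum
    refine (add_eq_pi_or_add_eq_pi_of_sin_add_sin_eq (rat_mul_pi_mem_Ioo hp)
      (rat_mul_pi_mem_Ioo hq) (rat_mul_pi_mem_Ioo hr) hsum' h).imp (fun hpr => ?_) fun hps => ?_
    · rw [← Real.sin_pi_sub, eq_sub_of_add_eq hpr, sub_sub_cancel]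
    · rw [← Real.sin_pi_sub, eq_sub_of_add_eq hps, sub_sub_cancel]
  · rw [← sin_one_sub_rat_mul_pi p, ← sin_one_sub_rat_mul_pi q, ← sin_one_sub_rat_mul_pi r,
      ← sin_one_sub_rat_mul_pi s] at h
    rw [← sin_one_sub_rat_mul_pi p, ← sin_one_sub_rat_mul_pi r, ← sin_one_sub_rat_mul_pi s]
    refine sin_rat_mul_pi_eq_or_eq_of_sum_eq_one (sub_pos.2 hp.2) (sub_pos.2 hq.2)
      (sub_pos.2 hr.2) (sub_pos.2 hs.2) ?_ h
    push_cast at hsum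
    linarith

theorem abs_sin_add_le (x y : ℝ) : |sin (x + y)| ≤ |sin x| + |sin y| := by
  rw [Real.sin_add]
  refine (abs_add_le _ _).trans ?_
  rw [abs_mul, abs_mul]
  gcongr
  · exact mul_le_of_le_one_right (abs_nonneg _) (Real.abs_cos_le_one y)
  · exact mul_le_of_le_one_left (abs_nonneg _) (Real.abs_cos_le_one x)

theorem abs_sin_add_lt {x y : ℝ} (hx : sin x ≠ 0) (hy : sin y ≠ 0) :
    |sin (x + y)| < |sin x| + |sin y| := by
  have hcos : |cos y| < 1 := by
    rw [← sq_lt_one_iff_abs_lt_one, Real.cos_sq']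
    linarith [sq_pos_of_ne_zero hy]
  rw [Real.sin_add]
  refine (abs_add_le _ _).trans_lt ?_
  rw [abs_mul, abs_mul]
  exact add_lt_add_of_lt_of_le (mul_lt_of_lt_one_right (abs_pos.2 hx) hcos)
    (mul_le_of_le_one_left (abs_nonneg _) (Real.abs_cos_le_one x))

theorem sin_lt_sin_add_sin_add_sin {x y z w : ℝ} (hx : 0 < sin x) (hy : 0 < sin y)
    (hz : 0 < sin z) {m : ℤ} (hsum : x + y + z + w = m * π) :
    sin w < sin x + sin y + sin z := by
  calc sin w ≤ |sin (m * π - (x + y + z))| := by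
        rw [← hsum, add_sub_cancel_left]
        exact le_abs_self _
    _ = |sin (x + y + z)| := by
        rw [Real.sin_int_mul_pi_sub, abs_neg, abs_mul, abs_zpow, abs_neg, abs_one, one_zpow,
          one_mul]
    _ ≤ |sin (x + y)| + |sin z| := abs_sin_add_le _ _
    _ < |sin x| + |sin y| + |sin z| := by
        gcongr
        exact abs_sin_add_lt hx.ne' hy.ne'
    _ = sin x + sin y + sin z := by
        rw [abs_of_pos hx, abs_of_pos hy, abs_of_pos hz]

theorem map_sin_rat_mul_pi_eq_of_sum_eq {P Q : Multiset ℚ} (hP : ∀ q ∈ P, q ∈ Set.Ioo 0 1)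
    (hQ : ∀ q ∈ Q, q ∈ Set.Ioo 0 1) (hcard : P.card + Q.card = 4) {m : ℤ}
    (hint : P.sum + Q.sum = m)
    (hsin : (P.map fun q : ℚ => sin (q * π)).sum = (Q.map fun q : ℚ => sin (q * π)).sum) :
    (P.map fun q : ℚ => sin (q * π)) = Q.map fun q : ℚ => sin (q * π) := by
  wlog hle : Q.card ≤ P.card generalizing P Q
  · exact (this hQ hP (by rwa [add_comm]) (by rwa [add_comm]) hsin.symm (by omega)).symm
  have hcases : Q.card = 0 ∧ P.card = 4 ∨ Q.card = 1 ∧ P.card = 3 ∨ Q.card = 2 ∧ P.card = 2 := by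
    omega
  rcases hcases with ⟨hQ0, hP4⟩ | ⟨hQ1, hP3⟩ | ⟨hQ2, hP2⟩
  · obtain rfl := Multiset.card_eq_zero.1 hQ0
    obtain ⟨a, b, c, d, rfl⟩ := Multiset.card_eq_four.1 hP4
    have hpos : ∀ q ∈ ({a, b, c, d} : Multiset ℚ), 0 < sin (q * π) := fun q hq =>
      sin_rat_mul_pi_pos (hP q hq)
    simp only [Multiset.insert_eq_cons, Multiset.mem_cons, Multiset.mem_singleton,
      forall_eq_or_imp, forall_eq] at hpos
    simp only [Multiset.insert_eq_cons, Multiset.map_cons, Multiset.map_singleton,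
      Multiset.map_zero, Multiset.sum_cons, Multiset.sum_singleton, Multiset.sum_zero] at hsin
    linarith
  · obtain ⟨d, rfl⟩ := Multiset.card_eq_one.1 hQ1
    obtain ⟨a, b, c, rfl⟩ := Multiset.card_eq_three.1 hP3
    have hpos : ∀ q ∈ ({a, b, c} : Multiset ℚ), 0 < sin (q * π) := fun q hq =>
      sin_rat_mul_pi_pos (hP q hq)
    simp only [Multiset.insert_eq_cons, Multiset.mem_cons, Multiset.mem_singleton,
      forall_eq_or_imp, forall_eq] at hpos
    simp only [Multiset.insert_eq_cons, Multiset.map_cons, Multiset.map_singleton,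
      Multiset.sum_cons, Multiset.sum_singleton] at hsin hint
    have hint' : (a * π + b * π + c * π + d * π : ℝ) = m * π := by
      rw [← add_mul, ← add_mul, ← add_mul]
      congr 1
      exact_mod_cast (by linarith : a + b + c + d = m)
    linarith [sin_lt_sin_add_sin_add_sin hpos.1 hpos.2.1 hpos.2.2 hint']
  · obtain ⟨c, d, rfl⟩ := Multiset.card_eq_two.1 hQ2
    obtain ⟨a, b, rfl⟩ := Multiset.card_eq_two.1 hP2
    simp only [Multiset.insert_eq_cons, Multiset.mem_cons, Multiset.mem_singleton,
      forall_eq_or_imp, forall_eq] at hP hQ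
    simp only [Multiset.insert_eq_cons, Multiset.map_cons, Multiset.map_singleton,
      Multiset.sum_cons, Multiset.sum_singleton] at hsin hint ⊢
    rcases sin_rat_mul_pi_eq_or_eq hP.1 hP.2 hQ.1 hQ.2 (by linarith) hsin with hac | had
    · rw [hac, show sin (b * π) = sin (d * π) by linarith]
    · rw [had, show sin (b * π) = sin (c * π) by linarith]
      exact Multiset.pair_comm _ _

theorem map_sum_replicate {ι α β : Type*} (s : Finset ι) (m : ι → ℕ) (a : ι → α) (f : α → β) :
    (∑ k ∈ s, Multiset.replicate (m k) (a k)).map f = ∑ k ∈ s, .replicate (m k) (f (a k)) := by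
  simpa only [Multiset.coe_mapAddMonoidHom, Multiset.map_replicate] using
    map_sum (Multiset.mapAddMonoidHom f) (fun k => Multiset.replicate (m k) (a k)) s

theorem sum_sum_replicate {ι M : Type*} [AddCommMonoid M] (s : Finset ι) (m : ι → ℕ) (a : ι → M) :
    (∑ k ∈ s, Multiset.replicate (m k) (a k)).sum = ∑ k ∈ s, m k • a k := by
  simpa only [Multiset.coe_sumAddMonoidHom, Multiset.sum_replicate] using
    map_sum Multiset.sumAddMonoidHom (fun k => Multiset.replicate (m k) (a k)) s

theorem count_sum_replicate {ι α : Type*} [DecidableEq α] (s : Finset ι) (m : ι → ℕ) (a : ι → α)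
    (b : α) :
    (∑ k ∈ s, Multiset.replicate (m k) (a k)).count b = ∑ k ∈ s with a k = b, m k := by
  simp only [Multiset.count_sum', Multiset.count_replicate, sum_filter]

theorem forall_mem_sum_replicate {ι α : Type*} {s : Finset ι} {a : ι → α} {S : Set α}
    (ha : ∀ k ∈ s, a k ∈ S) (m : ι → ℕ) :
    ∀ x ∈ ∑ k ∈ s, Multiset.replicate (m k) (a k), x ∈ S := by
  intro x hx
  obtain ⟨k, hk, hxk⟩ := Multiset.mem_sum.1 hx
  rw [Multiset.eq_of_mem_replicate hxk]
  exact ha k hk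

theorem natCast_div_mem_Ioo {N k : ℕ} (hk : k ∈ Ioo 0 N) : (k / N : ℚ) ∈ Set.Ioo 0 1 := by
  obtain ⟨hk0, hkN⟩ := mem_Ioo.1 hk
  have hN : (0 : ℚ) < N := by exact_mod_cast hk0.trans hkN
  exact ⟨div_pos (by exact_mod_cast hk0) hN, (div_lt_one hN).2 (by exact_mod_cast hkN)⟩

theorem sin_div_mul_pi_eq_iff {N j k : ℕ} (hj : j ∈ Ioo 0 N) (hk : k ∈ Ioo 0 N) :
    sin ((k / N : ℚ) * π) = sin ((j / N : ℚ) * π) ↔ k = j ∨ k = N - j := by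
  have hN : (N : ℝ) ≠ 0 := by
    rw [mem_Ioo] at hj
    exact_mod_cast (by omega : N ≠ 0)
  constructor
  · intro h
    refine (eq_or_add_eq_pi_of_sin_eq_sin (rat_mul_pi_mem_Ioo (natCast_div_mem_Ioo hk))
      (rat_mul_pi_mem_Ioo (natCast_div_mem_Ioo hj)) h).imp (fun heq => ?_) fun hadd => ?_
    · push_cast at heq
      field_simp at heq
      exact_mod_cast heq
    · push_cast at hadd
      field_simp at hadd
      have : k + j = N := by exact_mod_cast hadd
      omega
  · rintro (rfl | rfl)
    · rfl
    · rw [← Real.sin_pi_sub, Nat.cast_sub (mem_Ioo.1 hj).2.le]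
      congr 1
      push_cast
      field_simp
      ring

theorem filter_sin_div_mul_pi_eq {N j : ℕ} (hj : j ∈ Ioo 0 N) :
    ({k ∈ Ioo 0 N | sin ((k / N : ℚ) * π) = sin ((j / N : ℚ) * π)} : Finset ℕ) = {j, N - j} := by
  ext k
  have hkN : k = j ∨ k = N - j → k ∈ Ioo 0 N := by
    rw [mem_Ioo] at hj ⊢
    omega
  rw [mem_filter, mem_insert, mem_singleton]
  exact ⟨fun h => (sin_div_mul_pi_eq_iff hj h.1).1 h.2,
    fun h => ⟨hkN h, (sin_div_mul_pi_eq_iff hj (hkN h)).2 h⟩⟩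

theorem sum_replicate_sin_eq_of_sum_mul_sin_eq_zero {N : ℕ} (hN : N ≠ 0) {p q : ℕ → ℕ}
    (hdeg : ∑ k ∈ Ioo 0 N, (p k + q k) = 4)
    (hmu : (N : ℤ) ∣ ∑ k ∈ Ioo 0 N, (k : ℤ) * (q k - p k))
    (hnu : ∑ k ∈ Ioo 0 N, sin ((k / N : ℚ) * π) * (p k - q k) = 0) :
    ∑ k ∈ Ioo 0 N, Multiset.replicate (p k) (sin ((k / N : ℚ) * π)) =
      ∑ k ∈ Ioo 0 N, Multiset.replicate (q k) (sin ((k / N : ℚ) * π)) := by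
  -- Reflecting the angles of `p` preserves their sines and makes the angle sum a multiple of `π`.
  let P := ∑ k ∈ Ioo 0 N, Multiset.replicate (p k) (1 - k / N : ℚ)
  let Q := ∑ k ∈ Ioo 0 N, Multiset.replicate (q k) (k / N : ℚ)
  have hPmap : (P.map fun t : ℚ => sin (t * π)) =
      ∑ k ∈ Ioo 0 N, .replicate (p k) (sin ((k / N : ℚ) * π)) := by
    simp only [P, map_sum_replicate, sin_one_sub_rat_mul_pi]
  have hQmap : (Q.map fun t : ℚ => sin (t * π)) =
      ∑ k ∈ Ioo 0 N, .replicate (q k) (sin ((k / N : ℚ) * π)) := map_sum_replicate ..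
  have hcard : P.card + Q.card = 4 := by
    simp only [P, Q, Multiset.card_sum, Multiset.card_replicate, ← sum_add_distrib, hdeg]
  obtain ⟨c, hc⟩ := hmu
  have hint : P.sum + Q.sum = ((∑ k ∈ Ioo 0 N, (p k : ℤ) + c : ℤ) : ℚ) := by
    have hc' : (∑ k ∈ Ioo 0 N, (k : ℚ) * (q k - p k)) / N = c := by
      rw [div_eq_iff (Nat.cast_ne_zero.2 hN), mul_comm]
      exact_mod_cast hc
    simp only [P, Q, sum_sum_replicate, nsmul_eq_mul]
    push_cast
    rw [← hc', sum_div, ← sum_add_distrib, ← sum_add_distrib]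
    exact sum_congr rfl fun k _ => by ring
  have hsin : (P.map fun t : ℚ => sin (t * π)).sum = (Q.map fun t : ℚ => sin (t * π)).sum := by
    rw [hPmap, hQmap, sum_sum_replicate, sum_sum_replicate, ← sub_eq_zero, ← sum_sub_distrib,
      ← hnu]
    exact sum_congr rfl fun k _ => by rw [nsmul_eq_mul, nsmul_eq_mul, ← sub_mul, mul_comm]
  rw [← hPmap, ← hQmap]
  exact map_sin_rat_mul_pi_eq_of_sum_eq
    (forall_mem_sum_replicate (fun k hk => Set.Ioo.one_sub_mem (natCast_div_mem_Ioo hk)) p)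
    (forall_mem_sum_replicate (fun k hk => natCast_div_mem_Ioo hk) q) hcard hint hsin

theorem sum_pair_reflect_eq_of_sum_mul_sin_eq_zero {N : ℕ} {p q : ℕ → ℕ}
    (hdeg : ∑ k ∈ Ioo 0 N, (p k + q k) = 4)
    (hmu : (N : ℤ) ∣ ∑ k ∈ Ioo 0 N, (k : ℤ) * (q k - p k))
    (hnu : ∑ k ∈ Ioo 0 N, sin ((k / N : ℚ) * π) * (p k - q k) = 0) {j : ℕ} (hj : j ∈ Ioo 0 N) :
    ∑ k ∈ {j, N - j}, p k = ∑ k ∈ {j, N - j}, q k := by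
  have hN : N ≠ 0 := Nat.ne_zero_of_lt (mem_Ioo.1 hj).2
  have hcount := congrArg (Multiset.count (sin ((j / N : ℚ) * π)))
    (sum_replicate_sin_eq_of_sum_mul_sin_eq_zero hN hdeg hmu hnu)
  rwa [count_sum_replicate, count_sum_replicate, filter_sin_div_mul_pi_eq hj] at hcount

theorem sum_Ioo_eq_sum_add_reflect_add_middle {M : Type*} [AddCommMonoid M] (n : ℕ) (G : ℕ → M) :
    ∑ k ∈ Ioo 0 (2 * n + 2), G k =
      ∑ k ∈ Icc 1 n, (G k + G (2 * n + 2 - k)) + G (n + 1) := by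
  have hreflect : ∑ k ∈ Icc 1 n, G (2 * n + 2 - k) = ∑ k ∈ Ico (n + 2) (2 * n + 2), G k := by
    have h := sum_Ico_reflect G 1 (show n + 1 ≤ 2 * n + 2 + 1 by omega)
    rwa [show 2 * n + 2 + 1 - (n + 1) = n + 2 by omega, Nat.add_sub_cancel] at h
  calc ∑ k ∈ Ioo 0 (2 * n + 2), G k = ∑ k ∈ Ico 1 (2 * n + 2), G k := rfl
    _ = ∑ k ∈ Ico 1 (n + 1), G k + (G (n + 1) + ∑ k ∈ Ico (n + 2) (2 * n + 2), G k) := by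
      rw [← sum_Ico_consecutive G (Nat.le_add_left 1 n) (by omega),
        sum_eq_sum_Ico_succ_bot (show n + 1 < 2 * n + 2 by omega)]
    _ = ∑ k ∈ Icc 1 n, (G k + G (2 * n + 2 - k)) + G (n + 1) := by
      rw [sum_add_distrib, hreflect, add_assoc, add_comm (G (n + 1))]
      rfl

/-- The multiplicity with which `ω_k` enters `ν(Θ, θ)` with a positive sign; the multiplicity with
which it enters with a negative sign is `posMultiplicity n θ Θ k`. Because of the signs in `ν`, the
roles of `Θ` and `θ` are exchanged at the modes `k > N/2 = n + 1`. -/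
def posMultiplicity (n : ℕ) (Θ θ : ℕ → ℕ) (k : ℕ) : ℕ :=
  if k ≤ n + 1 then θ k else Θ k

theorem posMultiplicity_of_le {n k : ℕ} (hk : k ≤ n + 1) (Θ θ : ℕ → ℕ) :
    posMultiplicity n Θ θ k = θ k := if_pos hk

theorem posMultiplicity_reflect {n k : ℕ} (hk : k ≤ n) (Θ θ : ℕ → ℕ) :
    posMultiplicity n Θ θ (2 * n + 2 - k) = Θ (2 * n + 2 - k) := if_neg (by omega)

theorem posMultiplicity_add_posMultiplicity (n : ℕ) (Θ θ : ℕ → ℕ) (k : ℕ) :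
    posMultiplicity n Θ θ k + posMultiplicity n θ Θ k = Θ k + θ k := by
  unfold posMultiplicity
  split_ifs
  · rw [add_comm]
  · rfl

theorem fpuNu_eq_sum_posMultiplicity (n : ℕ) (Θ θ : ℕ → ℕ) :
    fpuNu n Θ θ = 2 * ∑ k ∈ Ioo 0 (2 * n + 2), sin ((k / (2 * n + 2 : ℕ) : ℚ) * π) *
      (posMultiplicity n Θ θ k - posMultiplicity n θ Θ k) := by
  rw [sum_Ioo_eq_sum_add_reflect_add_middle, fpuNu, mul_add, mul_sum]
  congr 1
  · refine sum_congr rfl fun k hk => ?_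
    have hkn := (mem_Icc.1 hk).2
    have hk' : k ∈ Ioo 0 (2 * n + 2) := by
      rw [mem_Icc] at hk
      rw [mem_Ioo]
      omega
    have hsin : sin (((2 * n + 2 - k : ℕ) / (2 * n + 2 : ℕ) : ℚ) * π) =
        sin ((k / (2 * n + 2 : ℕ) : ℚ) * π) :=
      (sin_div_mul_pi_eq_iff hk' (by rw [mem_Ioo] at hk' ⊢; omega)).2 (.inr rfl)
    simp only [hsin, posMultiplicity_reflect hkn, posMultiplicity_of_le (Nat.le_succ_of_le hkn)]
    push_cast
    ring_nf
  · simp only [posMultiplicity_of_le le_rfl]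
    push_cast
    ring_nf

theorem fpuMu_eq_sum_posMultiplicity_add (n : ℕ) (Θ θ : ℕ → ℕ) :
    fpuMu n Θ θ = ∑ k ∈ Ioo 0 (2 * n + 2),
        (k : ℤ) * (posMultiplicity n θ Θ k - posMultiplicity n Θ θ k) +
      (2 * n + 2) * ∑ k ∈ Icc 1 n, ((Θ (2 * n + 2 - k) : ℤ) - θ (2 * n + 2 - k)) := by
  rw [sum_Ioo_eq_sum_add_reflect_add_middle, fpuMu, mul_sum, add_right_comm, ← sum_add_distrib]
  congr 1
  · refine sum_congr rfl fun k hk => ?_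
    have hkn := (mem_Icc.1 hk).2
    simp only [posMultiplicity_of_le (Nat.le_succ_of_le hkn), posMultiplicity_reflect hkn]
    rw [Nat.cast_sub (by omega)]
    push_cast
    ring
  · simp only [posMultiplicity_of_le le_rfl]
    push_cast
    rfl

/-- **Quartic symmetric resonant monomials are trivial.**  If multi-indices `Θ, θ` of
total degree `4` satisfy `μ(Θ, θ) ≡ 0 (mod N)` and `ν(Θ, θ) = 0`, then
`θ_k − θ_{N−k} − Θ_k + Θ_{N−k} = 0` for `1 ≤ k < N/2` and `θ_{N/2} = Θ_{N/2}`. -/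
theorem quartic_symmetric_resonances_trivial (n : ℕ) (hn : 1 ≤ n) (Θ θ : ℕ → ℕ)
    (hdeg : (∑ k ∈ Finset.Icc 1 (2 * n + 1), (Θ k + θ k)) = 4)
    (hmu : (2 * n + 2 : ℤ) ∣ fpuMu n Θ θ)
    (hnu : fpuNu n Θ θ = 0) :
    (∀ k ∈ Finset.Icc 1 n,
      (θ k : ℤ) - θ (2 * n + 2 - k) - Θ k + Θ (2 * n + 2 - k) = 0) ∧
    (θ (n + 1) : ℤ) - Θ (n + 1) = 0 := by
  have hdeg' :
      ∑ k ∈ Ioo 0 (2 * n + 2), (posMultiplicity n Θ θ k + posMultiplicity n θ Θ k) = 4 := by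
    simp only [posMultiplicity_add_posMultiplicity]
    exact hdeg
  rw [fpuMu_eq_sum_posMultiplicity_add, dvd_add_left (dvd_mul_right _ _)] at hmu
  rw [fpuNu_eq_sum_posMultiplicity] at hnu
  have hpair {j : ℕ} (hj : j ∈ Ioo 0 (2 * n + 2)) :=
    sum_pair_reflect_eq_of_sum_mul_sin_eq_zero hdeg' (by exact_mod_cast hmu)
      ((mul_eq_zero.1 hnu).resolve_left two_ne_zero) hj
  refine ⟨fun k hk => ?_, ?_⟩
  · rw [mem_Icc] at hk
    have h := hpair (j := k) (by rw [mem_Ioo]; omega)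
    rw [sum_pair (by omega), sum_pair (by omega)] at h
    simp only [posMultiplicity_of_le (Nat.le_succ_of_le hk.2), posMultiplicity_reflect hk.2] at h
    omega
  · have h := hpair (j := n + 1) (by rw [mem_Ioo]; omega)
    rw [show 2 * n + 2 - (n + 1) = n + 1 by omega, pair_eq_singleton, sum_singleton,
      sum_singleton, posMultiplicity_of_le le_rfl, posMultiplicity_of_le le_rfl] at h
    omega
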